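/- Let s < T, let X₁,…,X_m : ℝ^d → ℝ^d be C^∞ vector fields with vanishing Euclidean divergence, and let β : [s,T]×ℝ^d → ℝ^m be continuous, continuously differentiable in the space variable, with M := sup_{[s,T]×ℝ^d} |β| < ∞ (Euclidean norm of β ∈ ℝ^m). Suppose ρ : [s,T]×ℝ^d → ℝ is continuous, continuously differentiable in t and twice continuously differentiable in y on (s,T]×ℝ^d, there is a compact set K ⊂ ℝ^d such that ρ(t,·) is supported in K for every t, and ρ solves ∂_tρ(t,y) = Δ_Gρ(t,·)(y) + div_G(β(t,·)ρ(t,·))(y) on (s,T]×ℝ^d. Then for every t ∈ [s,T]: ∫_{ℝ^d} ρ(t,y)² dy ≤ exp((M²/2)(t−s)) · ∫_{ℝ^d} ρ(s,y)² dy. -/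

import Mathlib

/-!
This is the energy method. The equation is in divergence form, `∂ₜρ = div_G (∇_G ρ + ρβ)`, and
divergence-free fields are skew-adjoint in `L²`, so that
`d/dt ∫ ρ² = 2 ∫ ρ ∂ₜρ = -2 ∫ ⟨∇_G ρ + ρβ, ∇_G ρ⟩`. Completing the square,
`-2 ⟨p + rb, p⟩ = |b|² r² / 2 - 2 |p + rb/2|²`, bounds the right-hand side by `(M²/2) ∫ ρ²`, and
Grönwall's inequality concludes.
-/

open MeasureTheory Set

/-- Directional derivative of `f` along the vector field `V` at `x`. -/
noncomputable def dirDeriv {d : ℕ} (V : (Fin d → ℝ) → (Fin d → ℝ))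
    (f : (Fin d → ℝ) → ℝ) (x : Fin d → ℝ) : ℝ :=
  fderiv ℝ f x (V x)

/-- Euclidean divergence of a vector field on `ℝ^d`. -/
noncomputable def divE {d : ℕ} (V : (Fin d → ℝ) → (Fin d → ℝ)) (x : Fin d → ℝ) : ℝ :=
  ∑ k, fderiv ℝ (fun y => V y k) x (Pi.single k 1)

/-- Horizontal Laplacian `Δ_G f = Σᵢ Xᵢ(Xᵢ f)`. -/
noncomputable def deltaG {d m : ℕ} (X : Fin m → (Fin d → ℝ) → (Fin d → ℝ))
    (f : (Fin d → ℝ) → ℝ) (x : Fin d → ℝ) : ℝ :=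
  ∑ i, dirDeriv (X i) (dirDeriv (X i) f) x

/-- Horizontal divergence `div_G v = Σᵢ Xᵢ vᵢ`. -/
noncomputable def divG {d m : ℕ} (X : Fin m → (Fin d → ℝ) → (Fin d → ℝ))
    (v : (Fin d → ℝ) → Fin m → ℝ) (x : Fin d → ℝ) : ℝ :=
  ∑ i, dirDeriv (X i) (fun y => v y i) x

/-- Euclidean norm on `ℝ^m`. -/
noncomputable def euclNorm {m : ℕ} (v : Fin m → ℝ) : ℝ :=
  Real.sqrt (∑ i, v i ^ 2)

open Function

theorem le_exp_mul_of_hasDerivAt_le_mul {f f' : ℝ → ℝ} {a b c : ℝ}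
    (hf : ContinuousOn f (Icc a b)) (hf' : ∀ t ∈ Ioo a b, HasDerivAt f (f' t) t)
    (hle : ∀ t ∈ Ioo a b, f' t ≤ c * f t) {t : ℝ} (ht : t ∈ Icc a b) :
    f t ≤ Real.exp (c * (t - a)) * f a := by
  let g : ℝ → ℝ := fun τ => Real.exp (-(c * (τ - a))) * f τ
  have hg : ∀ τ ∈ Ioo a b, HasDerivAt g (Real.exp (-(c * (τ - a))) * (f' τ - c * f τ)) τ := by
    intro τ hτ
    have hexp : HasDerivAt (fun τ => -(c * (τ - a))) (-(c * 1)) τ :=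
      (((hasDerivAt_id τ).sub_const a).const_mul c).neg
    exact (hexp.exp.mul (hf' τ hτ)).congr_deriv (by ring)
  have hanti : AntitoneOn g (Icc a b) := by
    refine antitoneOn_of_hasDerivWithinAt_nonpos (convex_Icc a b)
      ((Continuous.continuousOn (by fun_prop)).mul hf)
      (fun τ hτ => (hg τ (interior_Icc (a := a) ▸ hτ)).hasDerivWithinAt) fun τ hτ => ?_
    rw [interior_Icc] at hτ
    exact mul_nonpos_of_nonneg_of_nonpos (Real.exp_pos _).le (sub_nonpos.2 (hle τ hτ))
  have hgt : Real.exp (-(c * (t - a))) * f t ≤ f a := by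
    simpa [g] using hanti (left_mem_Icc.2 (ht.1.trans ht.2)) ht ht.1
  rwa [Real.exp_neg, inv_mul_le_iff₀ (Real.exp_pos _)] at hgt

section ParametricIntegral

variable {𝕜 α E : Type*} [RCLike 𝕜] [TopologicalSpace α] [R1Space α] [MeasurableSpace α]
  [OpensMeasurableSpace α] [NormedAddCommGroup E] [NormedSpace ℝ E] [NormedSpace 𝕜 E]
  {μ : Measure α} [IsFiniteMeasureOnCompacts μ]

theorem hasDerivAt_integral_of_compact_support {F F' : 𝕜 → α → E} {U : Set 𝕜} {K : Set α}
    (hU : IsOpen U) (hK : IsCompact K) (hF : ContinuousOn (uncurry F) (U ×ˢ univ))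
    (hF' : ContinuousOn (uncurry F') (U ×ˢ univ)) (hsupp : ∀ t ∈ U, ∀ y ∉ K, F t y = 0)
    (hderiv : ∀ t ∈ U, ∀ y, HasDerivAt (F · y) (F' t y) t) {t : 𝕜} (ht : t ∈ U) :
    HasDerivAt (fun τ => ∫ y, F τ y ∂μ) (∫ y, F' t y ∂μ) t := by
  have hsupp' : ∀ τ ∈ U, ∀ y ∉ K, F' τ y = 0 := fun τ hτ y hy =>
    (hderiv τ hτ y).unique <| (hasDerivAt_const τ 0).congr_of_eventuallyEq <| by
      filter_upwards [hU.mem_nhds hτ] with σ hσ using hsupp σ hσ y hy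
  have hint : ∀ {G : 𝕜 → α → E}, ContinuousOn (uncurry G) (U ×ˢ univ) →
      (∀ τ ∈ U, ∀ y ∉ K, G τ y = 0) → ∀ τ ∈ U, Integrable (G τ) μ := fun hG hG0 τ hτ =>
    (hG.comp_continuous (f := fun y => (τ, y)) (by fun_prop)
      fun _ => ⟨hτ, mem_univ _⟩).integrable_of_hasCompactSupport (.intro hK (hG0 τ hτ))
  obtain ⟨N, hN, hNU, hNc⟩ := local_compact_nhds (hU.mem_nhds ht)
  obtain ⟨C, hC⟩ := (hNc.prod hK).exists_bound_of_continuousOn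
    (hF'.mono (prod_mono hNU (subset_univ K)))
  have hbound : ∀ y, ∀ τ ∈ N, ‖F' τ y‖ ≤ (closure K).indicator (fun _ => |C|) y := by
    intro y τ hτ
    by_cases hy : y ∈ K
    · simpa [subset_closure hy] using (hC (τ, y) ⟨hτ, hy⟩).trans (le_abs_self C)
    · rw [hsupp' τ (hNU hτ) y hy, norm_zero]
      exact indicator_nonneg (fun _ _ => abs_nonneg C) y
  have hbound_int : Integrable ((closure K).indicator fun _ => |C|) μ :=
    (integrable_indicator_iff isClosed_closure.measurableSet).2
      (integrableOn_const hK.closure.measure_ne_top)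
  exact (hasDerivAt_integral_of_dominated_loc_of_deriv_le hN
    (by filter_upwards [hU.mem_nhds ht] with τ hτ using (hint hF hsupp τ hτ).aestronglyMeasurable)
    (hint hF hsupp t ht) (hint hF' hsupp' t ht).aestronglyMeasurable
    (.of_forall hbound) hbound_int (.of_forall fun y τ hτ => hderiv τ (hNU hτ) y)).2

end ParametricIntegral

section IntegralFDeriv

variable {E F : Type*} [NormedAddCommGroup E] [NormedSpace ℝ E] [FiniteDimensional ℝ E]
  [MeasurableSpace E] [BorelSpace E] [NormedAddCommGroup F] [NormedSpace ℝ F]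
  {μ : Measure E} [μ.IsAddHaarMeasure]

theorem integral_fderiv_apply_eq_zero {f : E → F} (hf : ContDiff ℝ 1 f)
    (hfs : HasCompactSupport f) (v : E) : ∫ x, fderiv ℝ f x v ∂μ = 0 := by
  have hint : Integrable f μ := hf.continuous.integrable_of_hasCompactSupport hfs
  have hint' : Integrable (fun x => fderiv ℝ f x v) μ :=
    ((hf.continuous_fderiv one_ne_zero).clm_apply continuous_const).integrable_of_hasCompactSupport
      (hfs.fderiv_apply ℝ v)
  simpa using integral_smul_fderiv_eq_neg_fderiv_smul_of_integrable (μ := μ) (f := fun _ => (1 : ℝ))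
    (g := f) (v := v) (by simp) (by simpa using hint') (by simpa using hint)
    (fun _ _ => differentiableAt_const _) (fun _ _ => hf.differentiable one_ne_zero _)

end IntegralFDeriv

section DirDeriv

variable {d : ℕ} {V : (Fin d → ℝ) → (Fin d → ℝ)} {f g : (Fin d → ℝ) → ℝ} {x : Fin d → ℝ}

theorem contDiff_dirDeriv {n k : WithTop ℕ∞} (hV : ContDiff ℝ n V) (hf : ContDiff ℝ k f)
    (hnk : n + 1 ≤ k) : ContDiff ℝ n (dirDeriv V f) :=
  (hf.fderiv_right hnk).clm_apply hV

theorem continuous_dirDeriv (hV : Continuous V) (hf : ContDiff ℝ 1 f) :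
    Continuous (dirDeriv V f) :=
  (contDiff_dirDeriv (contDiff_zero.2 hV) hf (zero_add 1).le).continuous

theorem hasCompactSupport_dirDeriv (hf : HasCompactSupport f) :
    HasCompactSupport (dirDeriv V f) :=
  (hf.fderiv ℝ).mono fun x hx h => hx (by simp [dirDeriv, h])

theorem dirDeriv_add (hf : DifferentiableAt ℝ f x) (hg : DifferentiableAt ℝ g x) :
    dirDeriv V (fun y => f y + g y) x = dirDeriv V f x + dirDeriv V g x := by
  simp [dirDeriv, fderiv_fun_add hf hg]

theorem dirDeriv_mul (hf : DifferentiableAt ℝ f x) (hg : DifferentiableAt ℝ g x) :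
    dirDeriv V (fun y => f y * g y) x = f x * dirDeriv V g x + g x * dirDeriv V f x := by
  simp [dirDeriv, fderiv_fun_mul hf hg]

theorem dirDeriv_eq_sum :
    dirDeriv V f x = ∑ k, V x k * fderiv ℝ f x (Pi.single k 1) := by
  conv_lhs => rw [dirDeriv, pi_eq_sum_univ' (V x)]
  simp

theorem divE_smul (hf : DifferentiableAt ℝ f x) (hV : DifferentiableAt ℝ V x) :
    divE (fun y => f y • V y) x = f x * divE V x + dirDeriv V f x := by
  have hterm : ∀ k, fderiv ℝ (fun y => f y * V y k) x (Pi.single k 1) =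
      f x * fderiv ℝ (fun y => V y k) x (Pi.single k 1) +
        V x k * fderiv ℝ f x (Pi.single k 1) := fun k => by
    simp [fderiv_fun_mul hf (differentiableAt_pi.1 hV k)]
  simp only [divE, dirDeriv_eq_sum, Pi.smul_apply, smul_eq_mul, hterm, Finset.sum_add_distrib,
    Finset.mul_sum]

theorem integral_divE_eq_zero (hV : ContDiff ℝ 1 V) (hVs : HasCompactSupport V) :
    ∫ x, divE V x = 0 := by
  have hVk : ∀ k, ContDiff ℝ 1 (fun y => V y k) := contDiff_pi.1 hV
  have hVks : ∀ k, HasCompactSupport (fun y => V y k) := fun k =>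
    hVs.comp_left (g := fun v : Fin d → ℝ => v k) rfl
  have hint : ∀ k, Integrable fun x => fderiv ℝ (fun y => V y k) x (Pi.single k 1) := fun k =>
    (((hVk k).continuous_fderiv one_ne_zero).clm_apply
      continuous_const).integrable_of_hasCompactSupport ((hVks k).fderiv_apply ℝ _)
  simp only [divE]
  rw [integral_finsetSum _ fun k _ => hint k]
  exact Finset.sum_eq_zero fun k _ => integral_fderiv_apply_eq_zero (hVk k) (hVks k) _

theorem integral_dirDeriv_eq_zero (hV : ContDiff ℝ 1 V) (hdiv : ∀ x, divE V x = 0)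
    (hf : ContDiff ℝ 1 f) (hfs : HasCompactSupport f) : ∫ x, dirDeriv V f x = 0 := by
  have hfV : ∀ x, divE (fun y => f y • V y) x = dirDeriv V f x := fun x => by
    rw [divE_smul (hf.differentiable one_ne_zero x) (hV.differentiable one_ne_zero x), hdiv,
      mul_zero, zero_add]
  simp only [← hfV]
  exact integral_divE_eq_zero (hf.smul hV) hfs.smul_right

theorem integral_mul_dirDeriv_eq_neg (hV : ContDiff ℝ 1 V) (hdiv : ∀ x, divE V x = 0)
    (hf : ContDiff ℝ 1 f) (hfs : HasCompactSupport f) (hg : ContDiff ℝ 1 g) :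
    ∫ x, f x * dirDeriv V g x = -∫ x, g x * dirDeriv V f x := by
  have hfg : Integrable fun x => f x * dirDeriv V g x :=
    (hf.continuous.mul (continuous_dirDeriv hV.continuous hg)).integrable_of_hasCompactSupport
      hfs.mul_right
  have hgf : Integrable fun x => g x * dirDeriv V f x :=
    (hg.continuous.mul (continuous_dirDeriv hV.continuous hf)).integrable_of_hasCompactSupport
      (hasCompactSupport_dirDeriv hfs).mul_left
  rw [eq_neg_iff_add_eq_zero, ← integral_add hfg hgf,
    ← integral_dirDeriv_eq_zero hV hdiv (hf.mul hg) hfs.mul_right]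
  exact integral_congr_ae <| .of_forall fun x =>
    (dirDeriv_mul (hf.differentiable one_ne_zero x) (hg.differentiable one_ne_zero x)).symm

end DirDeriv

theorem sum_sq_le_of_euclNorm_le {m : ℕ} {v : Fin m → ℝ} {M : ℝ} (hv : euclNorm v ≤ M) :
    ∑ i, v i ^ 2 ≤ M ^ 2 :=
  (Real.sqrt_le_left ((Real.sqrt_nonneg _).trans hv)).1 hv

theorem neg_two_mul_sum_add_mul_mul_le {ι : Type*} (t : Finset ι) (p b : ι → ℝ) (r : ℝ) :
    -(2 * ∑ i ∈ t, (p i + b i * r) * p i) ≤ (∑ i ∈ t, b i ^ 2) / 2 * r ^ 2 := by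
  rw [Finset.mul_sum, ← Finset.sum_neg_distrib, Finset.sum_div, Finset.sum_mul]
  refine Finset.sum_le_sum fun i _ => ?_
  linear_combination 2 * sq_nonneg (p i + b i * r / 2)

section Horizontal

variable {d m : ℕ} {X : Fin m → (Fin d → ℝ) → (Fin d → ℝ)} {b w : (Fin d → ℝ) → Fin m → ℝ}
  {u : (Fin d → ℝ) → ℝ}

/-- The horizontal gradient `∇_G f = (X₁f, …, X_mf)`. -/
noncomputable def gradG (X : Fin m → (Fin d → ℝ) → (Fin d → ℝ)) (f : (Fin d → ℝ) → ℝ)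
    (x : Fin d → ℝ) (i : Fin m) : ℝ :=
  dirDeriv (X i) f x

/-- The Fokker–Planck operator `u ↦ Δ_G u + div_G (b u)` with drift `b`, the right-hand side of the
evolution equation at a fixed time. -/
noncomputable def fokkerPlanckOp (X : Fin m → (Fin d → ℝ) → (Fin d → ℝ))
    (b : (Fin d → ℝ) → Fin m → ℝ) (u : (Fin d → ℝ) → ℝ) (x : Fin d → ℝ) : ℝ :=
  deltaG X u x + divG X (fun z i => b z i * u z) x

/-- The flux `∇_G u + b u`, whose horizontal divergence is `fokkerPlanckOp X b u`. -/
noncomputable def flux (X : Fin m → (Fin d → ℝ) → (Fin d → ℝ)) (b : (Fin d → ℝ) → Fin m → ℝ)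
    (u : (Fin d → ℝ) → ℝ) (x : Fin d → ℝ) (i : Fin m) : ℝ :=
  gradG X u x i + b x i * u x

theorem contDiff_gradG (hX : ∀ i, ContDiff ℝ 1 (X i)) (hu : ContDiff ℝ 2 u) :
    ContDiff ℝ 1 (gradG X u) :=
  contDiff_pi.2 fun i => contDiff_dirDeriv (hX i) hu one_add_one_eq_two.le

theorem contDiff_flux (hX : ∀ i, ContDiff ℝ 1 (X i)) (hb : ContDiff ℝ 1 b)
    (hu : ContDiff ℝ 2 u) : ContDiff ℝ 1 (flux X b u) :=
  contDiff_pi.2 fun i => (contDiff_pi.1 (contDiff_gradG hX hu) i).add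
    ((contDiff_pi.1 hb i).mul (hu.of_le one_le_two))

theorem divG_flux (hX : ∀ i, ContDiff ℝ 1 (X i)) (hb : ContDiff ℝ 1 b) (hu : ContDiff ℝ 2 u)
    (x : Fin d → ℝ) : divG X (flux X b u) x = fokkerPlanckOp X b u x := by
  have hgrad : ∀ i, Differentiable ℝ fun y => gradG X u y i := fun i =>
    (contDiff_pi.1 (contDiff_gradG hX hu) i).differentiable one_ne_zero
  have hdrift : ∀ i, Differentiable ℝ fun y => b y i * u y := fun i =>
    ((contDiff_pi.1 hb i).differentiable one_ne_zero).mul (hu.differentiable two_ne_zero)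
  exact (Finset.sum_congr rfl fun i _ => dirDeriv_add (hgrad i x) (hdrift i x)).trans
    Finset.sum_add_distrib

theorem integrable_mul_gradG {i : Fin m} (hX : Continuous (X i)) (hw : Continuous w)
    (hu : ContDiff ℝ 1 u) (hus : HasCompactSupport u) :
    Integrable fun x => w x i * gradG X u x i :=
  (((continuous_apply i).comp hw).mul
    (continuous_dirDeriv hX hu)).integrable_of_hasCompactSupport
      (hasCompactSupport_dirDeriv hus).mul_left

theorem integral_mul_divG_eq_neg (hX : ∀ i, ContDiff ℝ 1 (X i))
    (hXdiv : ∀ i x, divE (X i) x = 0) (hu : ContDiff ℝ 1 u) (hus : HasCompactSupport u)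
    (hw : ContDiff ℝ 1 w) :
    ∫ x, u x * divG X w x = -∫ x, ∑ i, w x i * gradG X u x i := by
  have hwi : ∀ i, ContDiff ℝ 1 fun y => w y i := contDiff_pi.1 hw
  have hint : ∀ i, Integrable fun x => u x * dirDeriv (X i) (fun y => w y i) x := fun i =>
    (hu.continuous.mul
      (continuous_dirDeriv (hX i).continuous (hwi i))).integrable_of_hasCompactSupport hus.mul_right
  simp only [divG, Finset.mul_sum]
  rw [integral_finsetSum _ fun i _ => hint i, integral_finsetSum _ fun i _ =>
    integrable_mul_gradG (hX i).continuous hw.continuous hu hus,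
    ← Finset.sum_neg_distrib]
  exact Finset.sum_congr rfl fun i _ =>
    integral_mul_dirDeriv_eq_neg (hX i) (hXdiv i) hu hus (hwi i)

theorem two_mul_integral_mul_fokkerPlanckOp_le (hX : ∀ i, ContDiff ℝ 1 (X i))
    (hXdiv : ∀ i x, divE (X i) x = 0) (hb : ContDiff ℝ 1 b) {M : ℝ}
    (hbM : ∀ x, euclNorm (b x) ≤ M) (hu : ContDiff ℝ 2 u) (hus : HasCompactSupport u) :
    2 * ∫ x, u x * fokkerPlanckOp X b u x ≤ M ^ 2 / 2 * ∫ x, u x ^ 2 := by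
  have hu1 : ContDiff ℝ 1 u := hu.of_le one_le_two
  have hflux : ContDiff ℝ 1 (flux X b u) := contDiff_flux hX hb hu
  have hint_flux : Integrable fun x => ∑ i, flux X b u x i * gradG X u x i :=
    integrable_finsetSum _ fun i _ =>
      integrable_mul_gradG (hX i).continuous hflux.continuous hu1 hus
  have hint_sq : Integrable fun x => u x ^ 2 :=
    (hu.continuous.pow 2).integrable_of_hasCompactSupport <| by
      simpa only [pow_two] using hus.mul_right
  have hpointwise : ∀ x, -(2 * ∑ i, flux X b u x i * gradG X u x i) ≤ M ^ 2 / 2 * u x ^ 2 :=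
    fun x => (neg_two_mul_sum_add_mul_mul_le _ (gradG X u x) (b x) (u x)).trans <| by
      gcongr
      exact sum_sq_le_of_euclNorm_le (hbM x)
  calc 2 * ∫ x, u x * fokkerPlanckOp X b u x
      = 2 * ∫ x, u x * divG X (flux X b u) x := by simp only [divG_flux hX hb hu]
    _ = ∫ x, -(2 * ∑ i, flux X b u x i * gradG X u x i) := by
      rw [integral_mul_divG_eq_neg hX hXdiv hu1 hus hflux, integral_neg, integral_const_mul,
        mul_neg]
    _ ≤ ∫ x, M ^ 2 / 2 * u x ^ 2 :=
      integral_mono (hint_flux.const_mul 2).neg (hint_sq.const_mul _) hpointwise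
    _ = M ^ 2 / 2 * ∫ x, u x ^ 2 := integral_const_mul _ _

end Horizontal

theorem fokker_planck_L2_estimate_general
    {d m : ℕ} {X : Fin m → (Fin d → ℝ) → (Fin d → ℝ)}
    (hX : ∀ i, ContDiff ℝ 1 (X i)) (hXdiv : ∀ i x, divE (X i) x = 0) {s T : ℝ}
    {β : ℝ → (Fin d → ℝ) → Fin m → ℝ} (hβ : ∀ t ∈ Ioo s T, ContDiff ℝ 1 (β t))
    {M : ℝ} (hβM : ∀ t ∈ Ioo s T, ∀ y, euclNorm (β t y) ≤ M)
    {ρ : ℝ → (Fin d → ℝ) → ℝ} (hρ : ContinuousOn (uncurry ρ) (Icc s T ×ˢ univ))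
    (hρC2 : ∀ t ∈ Ioo s T, ContDiff ℝ 2 (ρ t))
    (hρt : ContinuousOn (uncurry fun t y => deriv (ρ · y) t) (Ioo s T ×ˢ univ))
    {K : Set (Fin d → ℝ)} (hK : IsCompact K) (hsupp : ∀ t ∈ Icc s T, ∀ y ∉ K, ρ t y = 0)
    (hpde : ∀ t ∈ Ioo s T, ∀ y, HasDerivAt (ρ · y) (fokkerPlanckOp X (β t) (ρ t) y) t)
    {t : ℝ} (ht : t ∈ Icc s T) :
    ∫ y, ρ t y ^ 2 ≤ Real.exp (M ^ 2 / 2 * (t - s)) * ∫ y, ρ s y ^ 2 := by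
  have hsub : Ioo s T ⊆ Icc s T := Ioo_subset_Icc_self
  have hsq_supp : ∀ τ ∈ Icc s T, ∀ y ∉ K, ρ τ y ^ 2 = 0 := fun τ hτ y hy => by
    simp [hsupp τ hτ y hy]
  have hsq_cont : ContinuousOn (uncurry fun τ y => ρ τ y ^ 2) (Icc s T ×ˢ univ) := hρ.pow 2
  have henergy_cont : ContinuousOn (fun τ => ∫ y, ρ τ y ^ 2) (Icc s T) :=
    continuousOn_integral_of_compact_support hK hsq_cont fun τ y hτ => hsq_supp τ hτ y
  have henergy_deriv : ∀ τ ∈ Ioo s T, HasDerivAt (fun τ => ∫ y, ρ τ y ^ 2)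
      (∫ y, 2 * (ρ τ y * deriv (ρ · y) τ)) τ := fun τ =>
    hasDerivAt_integral_of_compact_support (F := fun τ y => ρ τ y ^ 2)
      (F' := fun τ y => 2 * (ρ τ y * deriv (ρ · y) τ)) isOpen_Ioo hK
      (hsq_cont.mono (prod_mono_left hsub))
      (((hρ.mono (prod_mono_left hsub)).mul hρt).const_mul 2)
      (fun σ hσ => hsq_supp σ (hsub hσ))
      fun σ hσ y => ((hpde σ hσ y).differentiableAt.hasDerivAt.fun_pow 2).congr_deriv (by ring)
  refine le_exp_mul_of_hasDerivAt_le_mul henergy_cont henergy_deriv (fun τ hτ => ?_) ht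
  simp only [(hpde τ hτ _).deriv, integral_const_mul]
  exact two_mul_integral_mul_fokkerPlanckOp_le hX hXdiv (hβ τ hτ) (hβM τ hτ) (hρC2 τ hτ)
    (.intro hK (hsupp τ (hsub hτ)))

/-- `L²` estimate for compactly supported classical solutions of the subelliptic
Fokker-Planck equation: `∫ ρ(t)² ≤ exp((M²/2)(t-s)) ∫ ρ(s)²` where `M` bounds `|β|`. -/
theorem fokker_planck_L2_estimate
    {d m : ℕ} (hd : 1 ≤ d) (hm : 1 ≤ m)
    (X : Fin m → (Fin d → ℝ) → (Fin d → ℝ))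
    (hXsmooth : ∀ i, ContDiff ℝ (⊤ : ℕ∞) (X i))
    (hXdiv : ∀ i x, divE (X i) x = 0)
    (s T : ℝ) (hsT : s < T)
    (β : ℝ → (Fin d → ℝ) → Fin m → ℝ)
    (hβcont : ContinuousOn (fun p : ℝ × (Fin d → ℝ) => β p.1 p.2) (Icc s T ×ˢ univ))
    (hβC1 : ∀ t ∈ Icc s T, ContDiff ℝ 1 (fun y => β t y))
    (M : ℝ)
    (hβbdd : ∀ t ∈ Icc s T, ∀ y, euclNorm (β t y) ≤ M)
    (ρ : ℝ → (Fin d → ℝ) → ℝ)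
    (hρcont : ContinuousOn (fun p : ℝ × (Fin d → ℝ) => ρ p.1 p.2) (Icc s T ×ˢ univ))
    (hρC2 : ∀ t ∈ Ioc s T, ContDiff ℝ 2 (ρ t))
    (hρtC : ContinuousOn (fun p : ℝ × (Fin d → ℝ) => deriv (fun τ => ρ τ p.2) p.1)
      (Ioc s T ×ˢ univ))
    (K : Set (Fin d → ℝ)) (hK : IsCompact K)
    (hsupp : ∀ t ∈ Icc s T, ∀ y ∉ K, ρ t y = 0)
    (hpde : ∀ t ∈ Ioc s T, ∀ y, HasDerivAt (fun τ => ρ τ y)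
      (deltaG X (ρ t) y + divG X (fun z i => β t z i * ρ t z) y) t) :
    ∀ t ∈ Icc s T,
      ∫ y, (ρ t y) ^ 2 ≤ Real.exp (M ^ 2 / 2 * (t - s)) * ∫ y, (ρ s y) ^ 2 := by
  exact fun t ht => fokker_planck_L2_estimate_general
    (fun i => (hXsmooth i).of_le (by exact_mod_cast le_top)) hXdiv
    (fun t ht => hβC1 t (Ioo_subset_Icc_self ht)) (fun t ht => hβbdd t (Ioo_subset_Icc_self ht))
    hρcont (fun t ht => hρC2 t (Ioo_subset_Ioc_self ht))
    (hρtC.mono (prod_mono_left Ioo_subset_Ioc_self)) hK hsupp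
    (fun t ht => hpde t (Ioo_subset_Ioc_self ht)) ht
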